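/- arXiv:2301.03417 — 2 statements merged into one kernel-verified Lean document; each statement's English description precedes it below -/
import Mathlib

section
/- Every oriented graph G⃗ is k-mixing for every integer k ≥ ⌈δ*_avg(G⃗)⌉ + 1, where δ*_avg denotes the average-degeneracy. -/
/-- A relation (digraph) is acyclic if no vertex lies on a directed cycle. -/
def RelAcyclic {V : Type} (r : V → V → Prop) : Prop :=
  ∀ v, ¬ Relation.TransGen r v v

/-- `α` is a `k`-dicolouring of the digraph `D`: each colour class induces
an acyclic subdigraph. -/
def IsDicolouring {V : Type} (D : V → V → Prop) (k : ℕ) (α : V → Fin k) : Prop :=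
  ∀ c : Fin k, RelAcyclic (fun u v => D u v ∧ α u = c ∧ α v = c)

/-- Two colourings differ on exactly one vertex. -/
def RecolAdj {V : Type} {k : ℕ} (α β : V → Fin k) : Prop :=
  ∃ v, α v ≠ β v ∧ ∀ w, w ≠ v → α w = β w

/-- A single edge of the `k`-dicolouring graph `D_k(D)`. -/
def RecolStep {V : Type} (D : V → V → Prop) (k : ℕ) (α β : V → Fin k) : Prop :=
  IsDicolouring D k α ∧ IsDicolouring D k β ∧ RecolAdj α β

/-- The digraph `D` is `k`-mixing: the `k`-dicolouring graph is connected. -/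
def Mixing {V : Type} (D : V → V → Prop) (k : ℕ) : Prop :=
  ∀ α β : V → Fin k, IsDicolouring D k α → IsDicolouring D k β →
    Relation.ReflTransGen (RecolStep D k) α β

/-- Out-degree of `v` in the subdigraph of `D` induced by `S`. -/
noncomputable def outDegOn {V : Type} (D : V → V → Prop) (S : Set V) (v : V) : ℕ :=
  {w ∈ S | D v w}.ncard

/-- In-degree of `v` in the subdigraph of `D` induced by `S`. -/
noncomputable def inDegOn {V : Type} (D : V → V → Prop) (S : Set V) (v : V) : ℕ :=
  {w ∈ S | D w v}.ncard

/-- An oriented graph: a digraph with no digon (hence also no loop). -/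
def Oriented {V : Type} (D : V → V → Prop) : Prop :=
  ∀ u v, D u v → ¬ D v u

/-- A walk of length `m` in the `k`-dicolouring graph (a redicolouring sequence):
consecutive dicolourings differ on exactly one vertex. -/
def RecolWalk {V : Type} (D : V → V → Prop) (k m : ℕ) (γ : ℕ → V → Fin k) : Prop :=
  (∀ i ≤ m, IsDicolouring D k (γ i)) ∧ ∀ i < m, RecolAdj (γ i) (γ (i + 1))

/-- A frozen `k`-dicolouring: no single vertex can be recoloured so as to
yield another `k`-dicolouring. -/
def FrozenDicolouring {V : Type} [DecidableEq V] (D : V → V → Prop) (k : ℕ)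
    (α : V → Fin k) : Prop :=
  IsDicolouring D k α ∧
    ∀ (v : V) (c : Fin k), c ≠ α v → ¬ IsDicolouring D k (Function.update α v c)

/-- The arc set of a digraph, as a set of ordered pairs. -/
def arcSet {V : Type} (D : V → V → Prop) : Set (V × V) := {p | D p.1 p.2}

/-- The arcs of `D` lying inside a set `S` of vertices. -/
def arcSetOn {V : Type} (D : V → V → Prop) (S : Set V) : Set (V × V) :=
  {p | p.1 ∈ S ∧ p.2 ∈ S ∧ D p.1 p.2}


theorem racyc_mono {V : Type} {r s : V → V → Prop} (h : ∀ a b, r a b → s a b)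
    (hs : RelAcyclic s) : RelAcyclic r := fun v hv => hs v (Relation.TransGen.mono h _ _ hv)

theorem racyc_in {V : Type} (R : V → V → Prop) (v : V) (hv : ∀ p, ¬ R p v)
    (h : RelAcyclic (fun a b => R a b ∧ a ≠ v ∧ b ≠ v)) : RelAcyclic R := by
  intro x hx
  have hxv : x ≠ v := by
    rintro rfl
    obtain ⟨b, _, hb⟩ := Relation.TransGen.tail'_iff.1 hx
    exact hv b hb
  have key : ∀ y, Relation.TransGen R x y →
      Relation.TransGen (fun a b => R a b ∧ a ≠ v ∧ b ≠ v) x y := by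
    intro y hy
    induction hy with
    | single e => exact .single ⟨e, hxv, fun e' => hv _ (e' ▸ e)⟩
    | tail e1 e ih =>
      refine ih.tail ⟨e, ?_, fun e' => hv _ (e' ▸ e)⟩
      rintro rfl
      obtain ⟨b, _, hb⟩ := Relation.TransGen.tail'_iff.1 e1
      exact hv b hb
  exact h x (key x hx)

theorem racyc_out {V : Type} (R : V → V → Prop) (v : V) (hv : ∀ p, ¬ R v p)
    (h : RelAcyclic (fun a b => R a b ∧ a ≠ v ∧ b ≠ v)) : RelAcyclic R := by
  have := racyc_in (Function.swap R) v hv (fun x hx => h x (by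
    rw [← Relation.transGen_swap]
    exact Relation.TransGen.mono (fun a b hab => ⟨hab.1, hab.2.2, hab.2.1⟩) _ _ hx))
  intro x hx
  exact this x (Relation.transGen_swap.2 hx)

/-- restriction of a digraph to a vertex set -/
def restr {V : Type} (D : V → V → Prop) (S : Set V) : V → V → Prop :=
  fun a b => D a b ∧ a ∈ S ∧ b ∈ S

theorem dicol_ext {V : Type} {D : V → V → Prop} {S : Set V} {k : ℕ} {v : V} {γ : V → Fin k}
    (h : IsDicolouring (restr D (S \ {v})) k γ)
    (hf : (∀ p ∈ S, D p v → γ p ≠ γ v) ∨ (∀ p ∈ S, D v p → γ p ≠ γ v)) :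
    IsDicolouring (restr D S) k γ := by
  intro c
  have h1 : RelAcyclic (fun a b => (restr D S a b ∧ γ a = c ∧ γ b = c) ∧ a ≠ v ∧ b ≠ v) :=
    racyc_mono (fun a b hab => ⟨⟨hab.1.1.1, ⟨hab.1.1.2.1, hab.2.1⟩, ⟨hab.1.1.2.2, hab.2.2⟩⟩,
      hab.1.2⟩) (h c)
  rcases hf with hf | hf
  · refine racyc_in _ v ?_ h1
    rintro p ⟨⟨e, hp, _⟩, h2, h3⟩
    exact hf p hp e (h2.trans h3.symm)
  · refine racyc_out _ v ?_ h1
    rintro p ⟨⟨e, _, hp⟩, h2, h3⟩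
    exact hf p hp e (h3.trans h2.symm)

theorem dicol_congr {V : Type} {D : V → V → Prop} {S : Set V} {k : ℕ} {γ δ : V → Fin k}
    (h : IsDicolouring (restr D S) k γ) (e : ∀ w ∈ S, δ w = γ w) :
    IsDicolouring (restr D S) k δ := by
  intro c
  refine racyc_mono ?_ (h c)
  rintro a b ⟨h1, h2, h3⟩
  exact ⟨h1, (e a h1.2.1) ▸ h2, (e b h1.2.2) ▸ h3⟩

theorem dicol_sub {V : Type} {D : V → V → Prop} {S T : Set V} (hTS : T ⊆ S) {k : ℕ}
    {γ : V → Fin k} (h : IsDicolouring (restr D S) k γ) : IsDicolouring (restr D T) k γ :=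
  fun c => racyc_mono (fun _ _ hab => ⟨⟨hab.1.1, hTS hab.1.2.1, hTS hab.1.2.2⟩, hab.2⟩) (h c)

theorem one_step {V : Type} [Fintype V] (D : V → V → Prop)
    (horiented : Oriented D) (m k : ℕ) (hk : (m + 1) / 2 + 1 ≤ k) (S : Set V) (v : V)
    (hv : outDegOn D S v + inDegOn D S v ≤ m) (γ γ₂ γ' : V → Fin k)
    (h : RecolStep (restr D (S \ {v})) k γ γ₂) (hγ' : IsDicolouring (restr D S) k γ')
    (e : ∀ w, w ≠ v → γ' w = γ w) :
    ∃ δ, IsDicolouring (restr D S) k δ ∧ (∀ w, w ≠ v → δ w = γ₂ w) ∧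
      Relation.ReflTransGen (RecolStep (restr D S) k) γ' δ := by
  classical
  obtain ⟨hg, hg2, u, hu, hw⟩ := h
  by_cases huv : u = v
  · exact ⟨γ', hγ', fun w hwv => (e w hwv).trans (hw w (huv ▸ hwv)), .refl⟩
  set δ := Function.update γ' u (γ₂ u) with hδ
  have hδu : δ u = γ₂ u := by simp [hδ]
  have hδw : ∀ w, w ≠ u → δ w = γ' w := fun w h => by simp [hδ, h]
  have hδ2 : ∀ w, w ≠ v → δ w = γ₂ w := by
    intro w hwv
    by_cases hwu : w = u
    · rw [hwu, hδu]
    · rw [hδw w hwu, e w hwv, hw w hwu]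
  by_cases hd : IsDicolouring (restr D S) k δ
  · refine ⟨δ, hd, hδ2, .single ⟨hγ', hd, u, ?_, fun w h => (hδw w h).symm⟩⟩
    rw [hδu, e u huv]; exact hu
  have hδS : IsDicolouring (restr D (S \ {v})) k δ := dicol_congr hg2 (fun w h => hδ2 w h.2)
  have hδv : δ v = γ' v := hδw v (Ne.symm huv)
  -- the new colour of u is the colour of v
  have hc : γ₂ u = γ' v := by
    by_contra hne
    apply hd
    intro c
    by_cases hcv : c = γ' v
    · subst hcv
      refine racyc_mono ?_ (hγ' (γ' v))
      rintro a b ⟨h1, h2, h3⟩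
      refine ⟨h1, ?_, ?_⟩
      · rw [← hδw a (by rintro rfl; exact hne (hδu ▸ h2))]; exact h2
      · rw [← hδw b (by rintro rfl; exact hne (hδu ▸ h3))]; exact h3
    · refine racyc_mono ?_ (hδS c)
      rintro a b ⟨h1, h2, h3⟩
      refine ⟨⟨h1.1, ⟨h1.2.1, ?_⟩, ⟨h1.2.2, ?_⟩⟩, h2, h3⟩
      · rintro rfl; exact hcv (h2.symm.trans hδv)
      · rintro rfl; exact hcv (h3.symm.trans hδv)
  have hfree : ∃ c, c ≠ γ' v ∧
      ((∀ p ∈ S, D p v → γ' p ≠ c) ∨ (∀ p ∈ S, D v p → γ' p ≠ c)) := by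
    by_contra! hno
    have hpq : (∃ p ∈ S, D p v ∧ δ p = δ v) ∧ (∃ p ∈ S, D v p ∧ δ p = δ v) := by
      by_contra hcon
      apply hd
      apply dicol_ext hδS
      by_contra! h2
      exact hcon h2
    obtain ⟨⟨p, hpS, hp, hpc⟩, q, hqS, hq, hqc⟩ := hpq
    have hO : (({γ' v}ᶜ : Set (Fin k))).ncard ≤ outDegOn D S v := by
      refine le_trans (Set.ncard_le_ncard ?_ (Set.toFinite _)) (Set.ncard_image_le (f := γ') (Set.toFinite _))
      intro c hc
      obtain ⟨w, a, b, c⟩ := (hno c hc).2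
      exact ⟨w, ⟨a, b⟩, c⟩
    have hI : (({γ' v}ᶜ : Set (Fin k))).ncard ≤ inDegOn D S v := by
      refine le_trans (Set.ncard_le_ncard ?_ (Set.toFinite _)) (Set.ncard_image_le (f := γ') (Set.toFinite _))
      intro c hc
      obtain ⟨w, a, b, c⟩ := (hno c hc).1
      exact ⟨w, ⟨a, b⟩, c⟩
    have hcard : (({γ' v}ᶜ : Set (Fin k))).ncard = k - 1 := by
      rw [Set.ncard_compl]; simp
    have huniv : (Set.univ : Set (Fin k)).ncard = k := by simp
    by_cases hpu : p = u
    · have hqu : q ≠ u := by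
        rintro rfl; subst hpu; exact horiented _ _ hp hq
      have : (Set.univ : Set (Fin k)).ncard ≤ outDegOn D S v := by
        refine le_trans (Set.ncard_le_ncard ?_ (Set.toFinite _)) (Set.ncard_image_le (f := γ') (Set.toFinite _))
        intro c _
        by_cases hc : c = γ' v
        · exact ⟨q, ⟨hqS, hq⟩, by rw [hc, ← hδv, ← hqc, hδw q hqu]⟩
        obtain ⟨w, a, b, c⟩ := (hno c hc).2
        exact ⟨w, ⟨a, b⟩, c⟩
      omega
    · have : (Set.univ : Set (Fin k)).ncard ≤ inDegOn D S v := by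
        refine le_trans (Set.ncard_le_ncard ?_ (Set.toFinite _)) (Set.ncard_image_le (f := γ') (Set.toFinite _))
        intro c _
        by_cases hc : c = γ' v
        · exact ⟨p, ⟨hpS, hp⟩, by rw [hc, ← hδv, ← hpc, hδw p hpu]⟩
        obtain ⟨w, a, b, c⟩ := (hno c hc).1
        exact ⟨w, ⟨a, b⟩, c⟩
      omega
  obtain ⟨c, hcne, hfree⟩ := hfree
  have hnv : ∀ p, (D p v ∨ D v p) → p ≠ v := by
    rintro p hp rfl
    have : D p p := by tauto
    exact horiented _ _ this this
  set ε := Function.update γ' v c with hε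
  set ζ := Function.update ε u (γ₂ u) with hζ
  have εv : ε v = c := by simp [hε]
  have εw : ∀ w, w ≠ v → ε w = γ' w := fun w h => by simp [hε, h]
  have ζu : ζ u = γ₂ u := by simp [hζ]
  have ζw : ∀ w, w ≠ u → ζ w = ε w := fun w h => by simp [hζ, h]
  have ζv : ζ v = c := by rw [ζw v (Ne.symm huv), εv]
  have ζ2 : ∀ w, w ≠ v → ζ w = γ₂ w := by
    intro w hwv
    by_cases hwu : w = u
    · rw [hwu, ζu]
    · rw [ζw w hwu, εw w hwv, e w hwv, hw w hwu]
  have εd : IsDicolouring (restr D S) k ε := by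
    apply dicol_ext (v := v) (dicol_congr (dicol_sub Set.sdiff_subset hγ') (fun w h => εw w h.2))
    rw [εv]
    refine hfree.imp (fun H p hp hd => ?_) (fun H p hp hd => ?_)
    · rw [εw p (hnv p (.inl hd))]; exact H p hp hd
    · rw [εw p (hnv p (.inr hd))]; exact H p hp hd
  have ζne : ∀ p, p ≠ v → γ' p ≠ c → ζ p ≠ c := by
    intro p hpv hpc
    by_cases hpu : p = u
    · rw [hpu, ζu, hc]; exact hcne.symm
    · rw [ζw p hpu, εw p hpv]; exact hpc
  have ζd : IsDicolouring (restr D S) k ζ := by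
    apply dicol_ext (v := v) (dicol_congr hg2 (fun w h => ζ2 w h.2))
    rw [ζv]
    refine hfree.imp (fun H p hp hd => ?_) (fun H p hp hd => ?_)
    · exact ζne p (hnv p (.inl hd)) (H p hp hd)
    · exact ζne p (hnv p (.inr hd)) (H p hp hd)
  refine ⟨ζ, ζd, ζ2, .tail (.single ⟨hγ', εd, v, ?_, fun w h => (εw w h).symm⟩)
    ⟨εd, ζd, u, ?_, fun w h => (ζw w h).symm⟩⟩
  · rw [εv]; exact hcne.symm
  · rw [ζu, εw u huv, e u huv]; exact hu

theorem mixing_restr {V : Type} [Fintype V] (D : V → V → Prop)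
    (horiented : Oriented D) (m k : ℕ)
    (hm : ∀ S : Set V, S.Nonempty → ∃ v ∈ S, outDegOn D S v + inDegOn D S v ≤ m)
    (hk : (m + 1) / 2 + 1 ≤ k) (n : ℕ) : ∀ S : Set V, S.ncard = n → ∀ α β : V → Fin k,
      IsDicolouring (restr D S) k α → IsDicolouring (restr D S) k β →
      (∀ w, w ∉ S → α w = β w) → Relation.ReflTransGen (RecolStep (restr D S) k) α β := by
  classical
  induction n with
  | zero =>
    intro S hS α β _ _ h
    rw [Set.ncard_eq_zero] at hS
    subst hS
    rw [show α = β from funext fun w => h w (by simp)]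
  | succ n ih =>
    intro S hS α β hα hβ h
    obtain ⟨v, hvS, hv⟩ := hm S (Set.nonempty_of_ncard_ne_zero (by omega))
    have hβ' : IsDicolouring (restr D (S \ {v})) k (Function.update β v (α v)) :=
      dicol_congr (dicol_sub Set.sdiff_subset hβ) (fun w hw => by
        have : w ≠ v := hw.2
        simp [this])
    have path := ih (S \ {v}) (by rw [Set.ncard_sdiff_singleton_of_mem hvS]; omega) α
      (Function.update β v (α v)) (dicol_sub Set.sdiff_subset hα) hβ' (by
        intro w hw
        by_cases hwv : w = v
        · subst hwv; simp
        · rw [Function.update_of_ne hwv]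
          exact h w (fun hs => hw ⟨hs, hwv⟩))
    have key : ∀ γ, Relation.ReflTransGen (RecolStep (restr D (S \ {v})) k) α γ →
        ∃ δ, IsDicolouring (restr D S) k δ ∧ (∀ w, w ≠ v → δ w = γ w) ∧
          Relation.ReflTransGen (RecolStep (restr D S) k) α δ := by
      intro γ hγ
      induction hγ with
      | refl => exact ⟨α, hα, fun _ _ => rfl, .refl⟩
      | tail _ hs ih2 =>
        obtain ⟨γ', h1, h2, h3⟩ := ih2
        obtain ⟨δ, h4, h5, h6⟩ := one_step D horiented m k hk S v hv _ _ γ' hs h1 h2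
        exact ⟨δ, h4, h5, h3.trans h6⟩
    obtain ⟨δ, h1, h2, h3⟩ := key _ path
    have h4 : ∀ w, w ≠ v → δ w = β w := fun w hw => by
      rw [h2 w hw, Function.update_of_ne hw]
    by_cases hvv : δ v = β v
    · have : δ = β := funext fun w => by
        by_cases hw : w = v
        · rw [hw, hvv]
        · exact h4 w hw
      exact this ▸ h3
    · exact h3.tail ⟨h1, hβ, v, hvv, h4⟩

/-- Every oriented graph is `k`-mixing for every `k ≥ ⌈δ*_avg⌉ + 1`.  Here
`m` stands for twice the average-degeneracy: every nonempty subdigraph has a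
vertex `v` with `d⁺ v + d⁻ v ≤ m`, so that `⌈δ*_avg⌉ = (m + 1) / 2`. -/
theorem avg_degeneracy_mixing {V : Type} [Fintype V] (D : V → V → Prop)
    (horiented : Oriented D) (m k : ℕ)
    (hm : ∀ S : Set V, S.Nonempty → ∃ v ∈ S, outDegOn D S v + inDegOn D S v ≤ m)
    (hk : (m + 1) / 2 + 1 ≤ k) :
    Mixing D k := by
  have hD : restr D Set.univ = D := by
    funext a b; simp [restr]
  intro α β hα hβ
  have := mixing_restr D horiented m k hm hk _ Set.univ rfl α β
  rw [hD] at this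
  exact this hα hβ (fun w hw => absurd (Set.mem_univ w) hw)
end

section
/- Let D be a digraph on n vertices and let k ≥ 2·δ*_min(D) + 2 be an integer. Then the diameter of the k-dicolouring graph D_k(D) is at most (δ*_min(D) + 1)·n; indeed, between any two k-dicolourings of D there is a redicolouring sequence in which every vertex is recoloured at most δ*_min(D) + 1 times. -/
section Helpers

def OkOn {V : Type} (D : V → V → Prop) {k : ℕ} (S : Finset V) (γ : V → Fin k) : Prop :=
  ∀ c : Fin k, RelAcyclic (fun u w => (u ∈ S ∧ w ∈ S ∧ D u w) ∧ γ u = c ∧ γ w = c)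

theorem acyclic_sink {V : Type} (R R' : V → V → Prop) (v : V) (hv : ∀ w, ¬ R v w)
    (hR : ∀ a b, R a b → a ≠ v → b ≠ v → R' a b) (h : RelAcyclic R') : RelAcyclic R := by
  intro x hx
  have hne : ∀ a b, Relation.TransGen R a b → a ≠ v := by
    intro a b hab
    induction hab using Relation.TransGen.head_induction_on with
    | single h1 => rintro rfl; exact hv _ h1
    | head h1 _ _ => rintro rfl; exact hv _ h1
  have key : ∀ a b, Relation.TransGen R a b → b ≠ v → Relation.TransGen R' a b := by
    intro a b hab hb
    induction hab using Relation.TransGen.head_induction_on with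
    | single h1 => exact .single (hR _ _ h1 (by rintro rfl; exact hv _ h1) hb)
    | head h1 h2 ih =>
      exact .head (hR _ _ h1 (by rintro rfl; exact hv _ h1) (hne _ _ h2)) ih
  exact h x (key x x hx (hne _ _ hx))

theorem acyclic_swap {V : Type} (R : V → V → Prop) (h : RelAcyclic R) :
    RelAcyclic (Function.swap R) := by
  intro x hx
  exact h x (Relation.transGen_swap.mp hx)

theorem OkOn.congr {V : Type} {D : V → V → Prop} {k : ℕ} {S : Finset V} {γ δ : V → Fin k}
    (h : OkOn D S γ) (e : ∀ u ∈ S, γ u = δ u) : OkOn D S δ := by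
  intro c x hx
  refine h c x (Relation.TransGen.mono ?_ _ _ hx)
  rintro a b ⟨⟨ha, hb, hD⟩, h1, h2⟩
  exact ⟨⟨ha, hb, hD⟩, by rw [e a ha, h1], by rw [e b hb, h2]⟩

theorem OkOn.mono {V : Type} {D : V → V → Prop} {k : ℕ} {S T : Finset V} {γ : V → Fin k}
    (h : OkOn D T γ) (e : S ⊆ T) : OkOn D S γ := by
  intro c x hx
  refine h c x (Relation.TransGen.mono ?_ _ _ hx)
  rintro a b ⟨⟨ha, hb, hD⟩, h1, h2⟩
  exact ⟨⟨e ha, e hb, hD⟩, h1, h2⟩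

theorem ok_out {V : Type} [DecidableEq V] {D : V → V → Prop} (hl : ∀ v, ¬ D v v) {k : ℕ}
    {S : Finset V} {v : V} (γ : V → Fin k) (h : OkOn D S γ)
    (hN : ∀ w ∈ S, D v w → γ w ≠ γ v) : OkOn D (insert v S) γ := by
  intro c
  refine acyclic_sink _ _ v ?_ ?_ (h c)
  · rintro w ⟨⟨_, hw, hD⟩, h1, h2⟩
    rcases Finset.mem_insert.mp hw with rfl | hw
    · exact hl _ hD
    · exact hN w hw hD (h2.trans h1.symm)
  · rintro a b ⟨⟨ha, hb, hD⟩, h1, h2⟩ hav hbv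
    exact ⟨⟨Finset.mem_of_mem_insert_of_ne ha hav, Finset.mem_of_mem_insert_of_ne hb hbv, hD⟩,
      h1, h2⟩

theorem ok_swap {V : Type} {D : V → V → Prop} {k : ℕ}
    {S : Finset V} {γ : V → Fin k} (h : OkOn D S γ) : OkOn (Function.swap D) S γ := by
  intro c x hx
  refine acyclic_swap _ (h c) x (Relation.TransGen.mono ?_ _ _ hx)
  rintro a b ⟨⟨ha, hb, hD⟩, h1, h2⟩
  exact ⟨⟨hb, ha, hD⟩, h2, h1⟩

theorem ok_in {V : Type} [DecidableEq V] {D : V → V → Prop} (hl : ∀ v, ¬ D v v) {k : ℕ}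
    {S : Finset V} {v : V} (γ : V → Fin k) (h : OkOn D S γ)
    (hN : ∀ w ∈ S, D w v → γ w ≠ γ v) : OkOn D (insert v S) γ :=
  ok_swap (D := Function.swap D) (ok_out (D := Function.swap D) hl γ (ok_swap h) hN)

def MPath {V : Type} [DecidableEq V] {k : ℕ} (P : (V → Fin k) → Prop) (S : Finset V) :
    (V → Fin k) → List (V × Fin k) → (V → Fin k) → Prop
  | γ, [], δ => γ = δ
  | γ, m :: L, δ => m.1 ∈ S ∧ P (Function.update γ m.1 m.2) ∧
      MPath P S (Function.update γ m.1 m.2) L δ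

theorem MPath.append {V : Type} [DecidableEq V] {k : ℕ} {P : (V → Fin k) → Prop} {S : Finset V}
    {γ δ ε : V → Fin k} {L L' : List (V × Fin k)} (h : MPath P S γ L δ) (h' : MPath P S δ L' ε) :
    MPath P S γ (L ++ L') ε := by
  induction L generalizing γ with
  | nil => cases h; exact h'
  | cons m L ih => exact ⟨h.1, h.2.1, ih h.2.2⟩

theorem MPath.mem {V : Type} [DecidableEq V] {k : ℕ} {P : (V → Fin k) → Prop} {S : Finset V}
    {γ δ : V → Fin k} {L : List (V × Fin k)} (h : MPath P S γ L δ) : ∀ m ∈ L, m.1 ∈ S := by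
  induction L generalizing γ with
  | nil => simp
  | cons m L ih =>
    intro x hx
    rcases List.mem_cons.mp hx with rfl | hx
    · exact h.1
    · exact ih h.2.2 x hx

theorem countP_eq_sum {V C : Type} [DecidableEq V] (N : Finset V) (L : List (V × C)) :
    (L.filter (fun m => decide (m.1 ∈ N))).length = ∑ w ∈ N, (L.map Prod.fst).count w := by
  induction L with
  | nil => simp
  | cons m L ih =>
    simp only [List.map_cons, List.count_cons, Finset.sum_add_distrib, List.filter_cons]
    by_cases h : m.1 ∈ N <;> simp [h, ih]

theorem exists_colour {V : Type} {d k : ℕ} (hk : 2 * d + 2 ≤ k) (N : Finset V)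
    (hN : N.card ≤ d) (γ : V → Fin k) (A : List (Fin k)) :
    ∃ c, (∀ w ∈ N, γ w ≠ c) ∧ c ∉ A.take (d + 1) := by
  classical
  have hc : (N.image γ ∪ (A.take (d + 1)).toFinset).card < (Finset.univ : Finset (Fin k)).card := by
    have h1 := Finset.card_union_le (N.image γ) (A.take (d + 1)).toFinset
    have h2 := Finset.card_image_le (s := N) (f := γ)
    have h3 := List.toFinset_card_le (A.take (d + 1))
    have h4 := List.length_take_le (d + 1) A
    rw [Finset.card_univ, Fintype.card_fin]
    omega
  obtain ⟨c, -, hc⟩ := Finset.exists_mem_notMem_of_card_lt_card hc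
  refine ⟨c, ?_, ?_⟩
  · rintro w hw rfl
    exact hc (Finset.mem_union_left _ (Finset.mem_image_of_mem _ hw))
  · intro h
    exact hc (Finset.mem_union_right _ (List.mem_toFinset.mpr h))

theorem insertion {V : Type} [DecidableEq V] {D : V → V → Prop} {d k : ℕ}
    (hk : 2 * d + 2 ≤ k) {S N : Finset V} {v : V} (hv : v ∉ S) (hNS : N ⊆ S) (hN : N.card ≤ d)
    (hok : ∀ γ : V → Fin k, OkOn D S γ → (∀ w ∈ N, γ w ≠ γ v) → OkOn D (insert v S) γ)
    (L : List (V × Fin k)) (δ : V → Fin k) : ∀ (γ : V → Fin k) (c : Fin k) (j r : ℕ),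
    OkOn D S γ → MPath (OkOn D S) S γ L δ → (∀ w ∈ N, γ w ≠ c) → j ≤ d + 1 →
    c ∉ ((L.filter (fun m : V × Fin k => decide (m.1 ∈ N))).map Prod.snd).take j →
    (L.filter (fun m : V × Fin k => decide (m.1 ∈ N))).length ≤ j + r * (d + 1) →
    ∃ (L' : List (V × Fin k)) (c' : Fin k),
      MPath (OkOn D (insert v S)) (insert v S) (Function.update γ v c) L'
        (Function.update δ v c') ∧
      (L'.map Prod.fst).count v ≤ r ∧
      ∀ u, u ≠ v → (L'.map Prod.fst).count u = (L.map Prod.fst).count u := by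
  have hok' : ∀ (γ : V → Fin k) (c : Fin k), OkOn D S γ → (∀ w ∈ N, γ w ≠ c) →
      OkOn D (insert v S) (Function.update γ v c) := by
    intro γ c h1 h2
    apply hok
    · refine h1.congr fun u hu => ?_
      rw [Function.update_of_ne]; rintro rfl; exact hv hu
    · intro w hw
      have : w ≠ v := by rintro rfl; exact hv (hNS hw)
      rw [Function.update_of_ne this, Function.update_self]
      exact h2 w hw
  induction L with
  | nil =>
    intro γ c j r _ hp _ _ _ _
    cases hp
    exact ⟨[], c, rfl, by simp, by simp⟩
  | cons m L ih =>
    intro γ c j r hγ hp hc hj hA hT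
    obtain ⟨hm, hP, hp⟩ := hp
    have hmv : m.1 ≠ v := by rintro h; exact hv (h ▸ hm)
    -- performing the move with a colour c avoiding everything
    have move : ∀ (c : Fin k) (j r : ℕ), (∀ w ∈ N, (Function.update γ m.1 m.2) w ≠ c) →
        j ≤ d + 1 → c ∉ ((L.filter (fun m : V × Fin k => decide (m.1 ∈ N))).map Prod.snd).take j →
        (L.filter (fun m : V × Fin k => decide (m.1 ∈ N))).length ≤ j + r * (d + 1) →
        ∃ (L' : List (V × Fin k)) (c' : Fin k),
          MPath (OkOn D (insert v S)) (insert v S) (Function.update γ v c) L'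
            (Function.update δ v c') ∧
          (L'.map Prod.fst).count v ≤ r ∧
          ∀ u, u ≠ v → (L'.map Prod.fst).count u = ((m :: L).map Prod.fst).count u := by
      intro c j r h1 h2 h3 h4
      obtain ⟨L', c', h5, h6, h7⟩ := ih _ c j r hP hp h1 h2 h3 h4
      refine ⟨m :: L', c', ⟨Finset.mem_insert_of_mem hm, ?_, ?_⟩, ?_, ?_⟩
      · rw [Function.update_comm hmv.symm]
        exact hok' _ _ hP h1
      · rw [Function.update_comm hmv.symm]
        exact h5
      · simpa [List.count_cons, hmv] using h6
      · intro u hu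
        simp [List.count_cons, h7 u hu]
    by_cases hmN : m.1 ∈ N
    · have upd : ∀ c : Fin k, (∀ w ∈ N, γ w ≠ c) → m.2 ≠ c →
          ∀ w ∈ N, (Function.update γ m.1 m.2) w ≠ c := by
        intro c h1 h2 w hw
        by_cases h : w = m.1
        · subst h; simpa using h2
        · rw [Function.update_of_ne h]; exact h1 w hw
      simp only [List.filter_cons, hmN, decide_true, if_true, List.length_cons,
        List.map_cons] at hA hT
      rcases j with _ | j
      · obtain _ | r := r
        · simp at hT
        obtain ⟨c', hc1, hc2⟩ := exists_colour hk N hN γ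
          (m.2 :: (L.filter (fun m : V × Fin k => decide (m.1 ∈ N))).map Prod.snd)
        rw [List.take_succ_cons, List.mem_cons, not_or] at hc2
        obtain ⟨L', c'', h5, h6, h7⟩ := move c' d r (upd c' hc1 (Ne.symm hc2.1)) (by omega) hc2.2
          (by rw [Nat.succ_mul] at hT; omega)
        refine ⟨(v, c') :: L', c'', ⟨Finset.mem_insert_self _ _, ?_, ?_⟩, ?_, ?_⟩
        · simp only [Function.update_idem]
          exact hok' _ _ hγ hc1
        · simp only [Function.update_idem]
          exact h5
        · simpa using h6
        · intro u hu
          rw [← h7 u hu]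
          simp [List.count_cons, hu.symm]
      · rw [List.take_succ_cons, List.mem_cons, not_or] at hA
        exact move c j r (upd c hc (Ne.symm hA.1)) (by omega) hA.2 (by omega)
    · simp only [List.filter_cons, hmN, decide_false] at hA hT
      refine move c j r ?_ hj (by simpa using hA) (by simpa using hT)
      intro w hw
      rw [Function.update_of_ne (by rintro rfl; exact hmN hw)]
      exact hc w hw

theorem main_list {V : Type} [DecidableEq V] {D : V → V → Prop} (hl : ∀ v, ¬ D v v) {d k : ℕ}
    (hd : ∀ S : Set V, S.Nonempty → ∃ v ∈ S, min (outDegOn D S v) (inDegOn D S v) ≤ d)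
    (hk : 2 * d + 2 ≤ k) (n : ℕ) : ∀ (S : Finset V), S.card = n → ∀ (α β : V → Fin k),
    OkOn D S α → OkOn D S β → (∀ u, u ∉ S → α u = β u) →
    ∃ L, MPath (OkOn D S) S α L β ∧ ∀ u, (L.map Prod.fst).count u ≤ d + 1 := by
  classical
  induction n with
  | zero =>
    intro S hS α β _ _ h
    rw [Finset.card_eq_zero] at hS
    subst hS
    exact ⟨[], funext fun u => h u (by simp), by simp⟩
  | succ n ih =>
    intro S₀ hS₀ α β hα hβ hαβ
    obtain ⟨v, hvS, hdeg⟩ := hd (S₀ : Set V) (by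
      rw [Finset.coe_nonempty, ← Finset.card_pos]; omega)
    obtain ⟨S, hv, rfl⟩ : ∃ S, v ∉ S ∧ S₀ = insert v S :=
      ⟨S₀.erase v, Finset.notMem_erase _ _, (Finset.insert_erase hvS).symm⟩
    have hScard : S.card = n := by
      rw [Finset.card_insert_of_notMem hv] at hS₀; omega
    obtain ⟨N, hNS, hN, hok⟩ : ∃ N : Finset V, N ⊆ S ∧ N.card ≤ d ∧
        ∀ γ : V → Fin k, OkOn D S γ → (∀ w ∈ N, γ w ≠ γ v) → OkOn D (insert v S) γ := by
      rcases min_le_iff.mp hdeg with h | h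
      · refine ⟨S.filter (fun w => D v w), Finset.filter_subset _ _, ?_, ?_⟩
        · refine le_trans ?_ h
          rw [outDegOn, ← Set.ncard_coe_finset]
          refine Set.ncard_le_ncard ?_ ((Finset.finite_toSet (insert v S)).subset fun x hx => hx.1)
          intro x hx
          simp at hx ⊢
          exact ⟨Or.inr hx.1, hx.2⟩
        · intro γ h1 h2
          exact ok_out hl γ h1 fun w hw hD => h2 w (by simp [hw, hD])
      · refine ⟨S.filter (fun w => D w v), Finset.filter_subset _ _, ?_, ?_⟩
        · refine le_trans ?_ h
          rw [inDegOn, ← Set.ncard_coe_finset]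
          refine Set.ncard_le_ncard ?_ ((Finset.finite_toSet (insert v S)).subset fun x hx => hx.1)
          intro x hx
          simp at hx ⊢
          exact ⟨Or.inr hx.1, hx.2⟩
        · intro γ h1 h2
          exact ok_in hl γ h1 fun w hw hD => h2 w (by simp [hw, hD])
    have hsub : S ⊆ insert v S := Finset.subset_insert _ _
    obtain ⟨L, hL, hcount⟩ := ih S hScard α (Function.update β v (α v)) (hα.mono hsub)
      ((hβ.mono hsub).congr fun u hu => by
        rw [Function.update_of_ne]; rintro rfl; exact hv hu)
      (by
        intro u hu
        by_cases h : u = v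
        · subst h; simp
        · rw [Function.update_of_ne h]; exact hαβ u (by simp [h, hu]))
    have hT : (L.filter (fun m : V × Fin k => decide (m.1 ∈ N))).length ≤ d * (d + 1) := by
      rw [countP_eq_sum]
      calc _ ≤ ∑ w ∈ N, (d + 1) := Finset.sum_le_sum fun w _ => hcount w
        _ = N.card * (d + 1) := by simp
        _ ≤ _ := Nat.mul_le_mul_right _ hN
    suffices h : ∃ (L' : List (V × Fin k)) (c' : Fin k),
        MPath (OkOn D (insert v S)) (insert v S) α L' (Function.update β v c') ∧
        (L'.map Prod.fst).count v ≤ d ∧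
        ∀ u, u ≠ v → (L'.map Prod.fst).count u = (L.map Prod.fst).count u by
      obtain ⟨L', c', h1, h2, h3⟩ := h
      refine ⟨L' ++ [(v, β v)], h1.append ⟨Finset.mem_insert_self _ _, ?_, ?_⟩, ?_⟩
      · simpa using hβ
      · show _ = _
        simp
      · intro u
        rw [List.map_append, List.count_append]
        by_cases h : u = v
        · subst h; simpa using h2
        · rw [h3 u h]
          have := hcount u
          simpa [List.count_cons, Ne.symm h] using this
    rcases Nat.eq_zero_or_pos d with rfl | hdpos
    · have hN0 : N = ∅ := Finset.card_eq_zero.mp (by omega)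
      obtain ⟨L', c', h1, h2, h3⟩ := insertion hk hv hNS hN hok L _ α (α v) 0 0
        (hα.mono hsub) hL (by simp [hN0]) (by omega) (by simp) (by omega)
      simp only [Function.update_idem, Function.update_eq_self] at h1
      exact ⟨L', c', h1, h2, h3⟩
    · obtain ⟨e, rfl⟩ : ∃ e, d = e + 1 := ⟨d - 1, by omega⟩
      obtain ⟨c, hc1, hc2⟩ := exists_colour hk N hN α
          ((L.filter (fun m : V × Fin k => decide (m.1 ∈ N))).map Prod.snd)
      obtain ⟨L', c', h1, h2, h3⟩ := insertion hk hv hNS hN hok L _ α c (e + 1 + 1) e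
        (hα.mono hsub) hL hc1 le_rfl hc2 (by nlinarith)
      simp only [Function.update_idem] at h1
      refine ⟨(v, c) :: L', c', ⟨Finset.mem_insert_self _ _, ?_, h1⟩, ?_, ?_⟩
      · apply hok
        · refine (hα.mono hsub).congr fun u hu => ?_
          rw [Function.update_of_ne]; rintro rfl; exact hv hu
        · intro w hw
          have : w ≠ v := by rintro rfl; exact hv (hNS hw)
          rw [Function.update_of_ne this, Function.update_self]
          exact hc1 w hw
      · simpa using h2
      · intro u hu
        rw [← h3 u hu]
        simp [List.count_cons, hu.symm]

theorem to_walk {V : Type} [DecidableEq V] {D : V → V → Prop} {k : ℕ}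
    {P : (V → Fin k) → Prop} (hP : ∀ γ, P γ → IsDicolouring D k γ) (S : Finset V)
    (L : List (V × Fin k)) (β : V → Fin k) : ∀ α, P α → MPath P S α L β →
    ∃ (m : ℕ) (γ : ℕ → V → Fin k), γ 0 = α ∧ γ m = β ∧ RecolWalk D k m γ ∧ m ≤ L.length ∧
      ∀ v : V, {i : ℕ | i < m ∧ γ i v ≠ γ (i + 1) v}.ncard ≤ (L.map Prod.fst).count v := by
  induction L with
  | nil =>
    intro α hα h
    exact ⟨0, fun _ => α, rfl, h, ⟨fun _ _ => hP _ hα, by simp⟩, by simp, by simp⟩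
  | cons mv L ih =>
    intro α hα h
    obtain ⟨_, h1, h2⟩ := h
    obtain ⟨m, γ, h0, hm, hw, hlen, hc⟩ := ih _ h1 h2
    by_cases he : α mv.1 = mv.2
    · have : Function.update α mv.1 mv.2 = α := by rw [← he]; simp
      refine ⟨m, γ, h0.trans this, hm, hw, by simp; omega, fun v => (hc v).trans ?_⟩
      simp [List.count_cons]
    · refine ⟨m + 1, fun i => Nat.casesOn i α γ, rfl, hm, ⟨?_, ?_⟩, by simpa using hlen, ?_⟩
      · rintro (_ | i) hi
        · exact hP _ hα
        · exact hw.1 i (by omega)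
      · rintro (_ | i) hi
        · refine ⟨mv.1, ?_, ?_⟩
          · show α mv.1 ≠ γ 0 mv.1
            rw [h0]; simpa using he
          · intro w hw
            show α w = γ 0 w
            rw [h0, Function.update_of_ne hw]
        · exact hw.2 i (by omega)
      · intro v
        have hfin : {i : ℕ | i < m ∧ γ i v ≠ γ (i + 1) v}.Finite :=
          (Set.finite_lt_nat m).subset fun i hi => hi.1
        have himg := Set.ncard_image_of_injective {i : ℕ | i < m ∧ γ i v ≠ γ (i + 1) v}
          Nat.succ_injective
        by_cases hv : v = mv.1
        · refine (Set.ncard_le_ncard (t := insert 0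
            (Nat.succ '' {i : ℕ | i < m ∧ γ i v ≠ γ (i + 1) v})) ?_
            ((hfin.image _).insert _)).trans ?_
          · rintro (_ | i) hi
            · simp
            · right
              exact ⟨i, ⟨by have := hi.1; omega, hi.2⟩, rfl⟩
          · refine (Set.ncard_insert_le _ _).trans ?_
            rw [himg]
            have := hc v
            subst hv
            simpa using this
        · refine (Set.ncard_le_ncard (t :=
            (Nat.succ '' {i : ℕ | i < m ∧ γ i v ≠ γ (i + 1) v})) ?_
            (hfin.image _)).trans ?_
          · rintro (_ | i) hi
            · exfalso
              apply hi.2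
              show α v = γ 0 v
              rw [h0, Function.update_of_ne hv]
            · exact ⟨i, ⟨by have := hi.1; omega, hi.2⟩, rfl⟩
          · rw [himg]
            refine (hc v).trans ?_
            simp [List.count_cons]

end Helpers

/-- If `k ≥ 2 δ*_min(D) + 2`, then between any two `k`-dicolourings of `D` there
is a redicolouring sequence of length at most `(δ*_min(D) + 1) · n` in which,
moreover, every vertex is recoloured at most `δ*_min(D) + 1` times. -/
theorem linear_diameter {V : Type} [Fintype V] (D : V → V → Prop)
    (hloopless : Irreflexive D) (d k : ℕ)
    (hd : ∀ S : Set V, S.Nonempty → ∃ v ∈ S, min (outDegOn D S v) (inDegOn D S v) ≤ d)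
    (hk : 2 * d + 2 ≤ k)
    (α β : V → Fin k) (hα : IsDicolouring D k α) (hβ : IsDicolouring D k β) :
    ∃ (m : ℕ) (γ : ℕ → V → Fin k),
      γ 0 = α ∧ γ m = β ∧ RecolWalk D k m γ ∧
      m ≤ (d + 1) * Fintype.card V ∧
      ∀ v : V, {i : ℕ | i < m ∧ γ i v ≠ γ (i + 1) v}.ncard ≤ d + 1 := by
  classical
  have hl : ∀ v, ¬ D v v := fun v h => hloopless v h
  have iff1 : ∀ γ : V → Fin k, OkOn D Finset.univ γ ↔ IsDicolouring D k γ := by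
    intro γ
    simp [OkOn, IsDicolouring]
  obtain ⟨L, hL, hc⟩ := main_list hl hd hk _ Finset.univ rfl α β ((iff1 α).mpr hα)
    ((iff1 β).mpr hβ) (by simp)
  obtain ⟨m, γ, h0, hm, hw, hlen, hcv⟩ :=
    to_walk (fun γ => (iff1 γ).mp) Finset.univ L β α ((iff1 α).mpr hα) hL
  refine ⟨m, γ, h0, hm, hw, ?_, fun v => (hcv v).trans (hc v)⟩
  have h := countP_eq_sum Finset.univ L
  simp only [Finset.mem_univ, decide_true, List.filter_true] at h
  calc m ≤ L.length := hlen
    _ = _ := h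
    _ ≤ ∑ w : V, (d + 1) := Finset.sum_le_sum fun w _ => hc w
    _ = _ := by simp [mul_comm]
end
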